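/- For every natural number c₁ and every real c₂ with 0 < c₂ ≤ 1, there exists a real constant C such that the following holds: every finite simple graph G on n ≥ 2 vertices with m edges in which all but at most c₁ of the vertices have degree at least c₂ · n admits a graphic parity network of size at most m + C · n · ln n. -/

import Mathlib

/-- Apply a CNOT gate `g = (control, target)` to a state `t : V → Finset V`:
the target wire receives the symmetric difference of the control and target terms,
all other wires are unchanged. -/
def applyGate {V : Type*} [DecidableEq V] (g : V × V) (t : V → Finset V) : V → Finset V :=
  fun w => if w = g.2 then symmDiff (t g.1) (t g.2) else t w

/-- Run a circuit (a list of CNOT gates) from the initial state `term v = {v}`. -/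
def runCircuit {V : Type*} [DecidableEq V] (C : List (V × V)) : V → Finset V :=
  C.foldl (fun t g => applyGate g t) (fun v => {v})

/-- `C` is a graphic parity network for the graph `G`:
every gate has distinct control and target, every edge `{u, v}` of `G` appears as the
term of some wire after some prefix of the circuit, and the final state is the initial
state. Its size is `C.length`. -/
def IsGPN {V : Type*} [DecidableEq V] (G : SimpleGraph V) (C : List (V × V)) : Prop :=
  (∀ g ∈ C, g.1 ≠ g.2) ∧
  (∀ u v : V, G.Adj u v → ∃ (k : ℕ) (w : V), runCircuit (C.take k) w = {u, v}) ∧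
  (∀ v : V, runCircuit C v = {v})

/-!
Process the vertices one at a time. While the vertex `c` is processed, every unprocessed neighbour
`v` of `c` is made to carry the term `{v, c}`, so that each edge is realized when its first endpoint
is processed. Between two rounds the wire of an unprocessed vertex `v` carries `{v, p v}`, where the
*pointer* `p v` is its last processed neighbour. Redirecting one pointer to `c` costs one gate if
`v` points to itself and two in general, but all the wires pointing to a common `j` can be
redirected with one gate each and only two further gates.

It remains to keep the number of distinct pointers small. Colour the vertices uniformly at random
with `T ≈ c₂ n / (4 ln n)` linearly ordered colours, and process them in the order of their colours.
With high probability a vertex of degree at least `c₂ n` has neighbours of every colour. Its pointer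
then has the colour of `c` or the preceding one, which leaves `O(n / T) = O(ln n)` possible
pointers, and the at most `c₁` exceptional vertices cost `O(c₁)` further gates in each round.
-/

open Finset Function
open scoped BigOperators

section PointerCircuits

variable {V : Type*} [DecidableEq V] {p q r : V → V} {c j w : V} {A B : Finset V} {M N : ℕ}

/-- The state in which the wire `v` carries `{v, p v}`; a wire pointing to itself carries `{v}`. -/
def pointerState (p : V → V) : V → Finset V := fun v => {v, p v}

/-- The pointers `p`, except that all the wires in `A` point to `c`. -/
def retarget (p : V → V) (A : Finset V) (c : V) : V → V := fun v => if v ∈ A then c else p v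

lemma retarget_of_mem (hw : w ∈ A) : retarget p A c w = c := if_pos hw

lemma retarget_of_notMem (hw : w ∉ A) : retarget p A c w = p w := if_neg hw

lemma retarget_empty (p : V → V) (c : V) : retarget p ∅ c = p := by
  funext v
  exact retarget_of_notMem (notMem_empty v)

lemma retarget_insert (p : V → V) (A : Finset V) (w c : V) :
    retarget p (insert w A) c = update (retarget p A c) w c := by
  funext v
  by_cases hv : v = w <;> simp [retarget, hv]

lemma retarget_retarget (p : V → V) (A B : Finset V) (c : V) :
    retarget (retarget p A c) B c = retarget p (A ∪ B) c := by
  funext v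
  by_cases hA : v ∈ A <;> by_cases hB : v ∈ B <;> simp [retarget, hA, hB]

/-- Some circuit with at most `N` gates turns the pointers `p` into the pointers `q`. -/
def Reaches (p q : V → V) (N : ℕ) : Prop :=
  ∃ C : List (V × V), (∀ g ∈ C, g.1 ≠ g.2) ∧ C.length ≤ N ∧
    C.foldl (fun t g => applyGate g t) (pointerState p) = pointerState q

namespace Reaches

lemma refl (p : V → V) : Reaches p p 0 :=
  ⟨[], by simp⟩

lemma trans (h : Reaches p q M) (h' : Reaches q r N) : Reaches p r (M + N) := by
  obtain ⟨C, hC, hCM, hCq⟩ := h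
  obtain ⟨D, hD, hDN, hDr⟩ := h'
  refine ⟨C ++ D, ?_, by rw [List.length_append]; lia, by rw [List.foldl_append, hCq, hDr]⟩
  exact fun g hg => (List.mem_append.1 hg).elim (hC g) (hD g)

lemma mono (h : Reaches p q M) (hMN : M ≤ N) : Reaches p q N :=
  let ⟨C, hC, hCM, hCq⟩ := h
  ⟨C, hC, hCM.trans hMN, hCq⟩

lemma update_of_symmDiff (hjw : j ≠ w) (h : symmDiff {j, p j} {w, p w} = ({w, c} : Finset V)) :
    Reaches p (update p w c) 1 := by
  refine ⟨[(j, w)], by simpa using hjw, by simp, funext fun v => ?_⟩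
  by_cases hv : v = w
  · subst hv
    simpa [applyGate, pointerState] using h
  · simp [applyGate, pointerState, hv]

lemma attach (hc : p c = c) (hw : p w = w) (hcw : c ≠ w) : Reaches p (update p w c) 1 :=
  update_of_symmDiff hcw (by ext x; simp only [mem_symmDiff, mem_insert, mem_singleton]; grind)

lemma detach (hw : p w = j) (hj : p j = j) (hjw : j ≠ w) : Reaches p (update p w w) 1 :=
  update_of_symmDiff hjw (by ext x; simp only [mem_symmDiff, mem_insert, mem_singleton]; grind)

lemma slide (hw : p w = j) (hj : p j = c) (hjw : j ≠ w) (hcw : c ≠ w) (hcj : c ≠ j) :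
    Reaches p (update p w c) 1 :=
  update_of_symmDiff hjw (by ext x; simp only [mem_symmDiff, mem_insert, mem_singleton]; grind)

lemma retarget_of_update (k : V → ℕ)
    (h : ∀ B ⊆ A, ∀ w ∈ A, w ∉ B →
      Reaches (retarget p B c) (update (retarget p B c) w c) (k w)) :
    Reaches p (retarget p A c) (∑ w ∈ A, k w) := by
  suffices ∀ B ⊆ A, Reaches p (retarget p B c) (∑ w ∈ B, k w) from this A subset_rfl
  intro B
  induction B using Finset.induction_on with
  | empty => simpa [retarget_empty] using refl p
  | insert w B hw ih =>
    intro hB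
    rw [insert_subset_iff] at hB
    rw [retarget_insert, sum_insert hw, add_comm]
    exact (ih hB.2).trans (h B hB.2 w hB.1 hw)

lemma retarget_each (hc : p c = c) (hcA : c ∉ A)
    (hA : ∀ v ∈ A, p v ≠ v → p v ∉ A ∧ p (p v) = p v) :
    Reaches p (retarget p A c) (#A + #{v ∈ A | p v ≠ v}) := by
  rw [card_eq_sum_ones, card_filter, ← sum_add_distrib]
  refine retarget_of_update _ fun B hB w hw hwB => ?_
  have hcw : c ≠ w := ne_of_mem_of_not_mem hw hcA |>.symm
  have hBc : retarget p B c c = c := by simp [retarget, hc]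
  have hBw : retarget p B c w = p w := retarget_of_notMem hwB
  by_cases hpw : p w = w
  · simpa [hpw] using attach hBc (hBw.trans hpw) hcw
  · obtain ⟨hpA, hpp⟩ := hA w hw hpw
    have h_detach := detach hBw ((retarget_of_notMem fun h => hpA (hB h)).trans hpp) hpw
    have h_attach : Reaches (update (retarget p B c) w w) _ 1 :=
      attach ((update_of_ne hcw _ _).trans hBc) (update_self ..) hcw
    simpa [hpw] using h_detach.trans h_attach

/-- Pointing `j` to `c` first lets every wire that points to `j` slide to `c` with a single gate. -/
lemma retarget_fibre (hc : p c = c) (hj : p j = j) (hjc : j ≠ c) (hcA : c ∉ A) (hjA : j ∉ A)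
    (hA : ∀ v ∈ A, p v = j) : Reaches p (retarget p A c) (#A + 2) := by
  set q := update p j c with hq
  have h_attach : Reaches p q 1 := attach hc hj hjc.symm
  have h_slide : Reaches q (retarget q A c) #A := by
    rw [card_eq_sum_ones]
    refine retarget_of_update _ fun B hB w hw hwB => ?_
    have hjw : j ≠ w := ne_of_mem_of_not_mem hw hjA |>.symm
    have hcw : c ≠ w := ne_of_mem_of_not_mem hw hcA |>.symm
    refine slide (j := j) ?_ ?_ hjw hcw hjc.symm
    · rw [retarget_of_notMem hwB, hq, update_of_ne hjw.symm, hA w hw]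
    · rw [retarget_of_notMem fun h => hjA (hB h), hq, update_self]
  have h_detach : Reaches (retarget q A c) (update (retarget q A c) j j) 1 :=
    detach (j := c) (by simp [retarget, hjA, hq]) (by simp [retarget, hq, hjc.symm, hc]) hjc.symm
  have h_eq : update (retarget q A c) j j = retarget p A c := by
    funext v
    by_cases hv : v = j
    · subst hv
      simp [retarget, hjA, hj]
    · simp [retarget, hq, hv]
  exact h_eq ▸ ((h_attach.trans h_slide).trans h_detach).mono (by lia)

lemma retarget_fibres (hc : p c = c) (hcA : c ∉ A)
    (hA : ∀ v ∈ A, p v ≠ c ∧ p v ∉ A ∧ p (p v) = p v) {J : Finset V}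
    (hJ : ∀ v ∈ A, p v ∈ J) : Reaches p (retarget p A c) (#A + 2 * #J) := by
  induction J using Finset.induction_on generalizing A p with
  | empty =>
    obtain rfl : A = ∅ := eq_empty_of_forall_notMem fun v hv => notMem_empty _ (hJ v hv)
    simpa [retarget_empty] using refl p
  | insert j J hj ih =>
    set F : Finset V := {v ∈ A | p v = j}
    have hFA : F ⊆ A := filter_subset _ _
    have hcard : #(A \ F) + #F = #A := card_sdiff_add_card_eq_card hFA
    have h_fibre : Reaches p (retarget p F c) (#F + 2) := by
      rcases F.eq_empty_or_nonempty with hF | ⟨v, hv⟩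
      · simpa [hF, retarget_empty] using (refl p).mono (Nat.zero_le 2)
      · obtain ⟨hvA, rfl⟩ := mem_filter.1 hv
        obtain ⟨hpc, hpA, hpp⟩ := hA v hvA
        exact retarget_fibre hc hpp hpc (fun h => hcA (hFA h)) (fun h => hpA (hFA h))
          fun v hv => (mem_filter.1 hv).2
    have h_rest : Reaches (retarget p F c) (retarget (retarget p F c) (A \ F) c)
        (#(A \ F) + 2 * #J) := by
      refine ih (by simp [retarget, hc]) (fun h => hcA (sdiff_subset h)) (fun v hv => ?_)
        fun v hv => ?_ <;> obtain ⟨hvA, hvF⟩ := mem_sdiff.1 hv <;> rw [retarget_of_notMem hvF]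
      · obtain ⟨hpc, hpA, hpp⟩ := hA v hvA
        rw [retarget_of_notMem fun h => hpA (hFA h)]
        exact ⟨hpc, fun h => hpA (sdiff_subset h), hpp⟩
      · exact (mem_insert.1 (hJ v hvA)).resolve_left fun h => hvF (mem_filter.2 ⟨hvA, h⟩)
    rw [retarget_retarget, union_sdiff_of_subset hFA] at h_rest
    exact (h_fibre.trans h_rest).mono (by rw [card_insert_of_notMem hj]; lia)

lemma retarget_each_or_fibres (hc : p c = c) (hcA : c ∉ A)
    (hA : ∀ v ∈ A, p v ≠ v → p v ≠ c ∧ p v ∉ A ∧ p (p v) = p v) (J : Finset V) :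
    Reaches p (retarget p A c) (#A + 2 * #J + #{v ∈ A | p v ≠ v ∧ p v ∉ J}) := by
  set F : Finset V := {v ∈ A | p v ≠ v ∧ p v ∈ J}
  have hFA : F ⊆ A := filter_subset _ _
  have hcard : #(A \ F) + #F = #A := card_sdiff_add_card_eq_card hFA
  have h_fibres : Reaches p (retarget p F c) (#F + 2 * #J) := by
    refine retarget_fibres hc (fun h => hcA (hFA h)) (fun v hv => ?_) fun v hv =>
      (mem_filter.1 hv).2.2
    obtain ⟨hvA, hpv, -⟩ := mem_filter.1 hv
    obtain ⟨hpc, hpA, hpp⟩ := hA v hvA hpv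
    exact ⟨hpc, fun h => hpA (hFA h), hpp⟩
  have h_rest : Reaches (retarget p F c) (retarget (retarget p F c) (A \ F) c)
      (#(A \ F) + #{v ∈ A \ F | retarget p F c v ≠ v}) := by
    refine retarget_each (by simp [retarget, hc]) (fun h => hcA (sdiff_subset h))
      fun v hv hpv => ?_
    obtain ⟨hvA, hvF⟩ := mem_sdiff.1 hv
    rw [retarget_of_notMem hvF] at hpv ⊢
    obtain ⟨-, hpA, hpp⟩ := hA v hvA hpv
    rw [retarget_of_notMem fun h => hpA (hFA h)]
    exact ⟨fun h => hpA (sdiff_subset h), hpp⟩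
  have h_far : #{v ∈ A \ F | retarget p F c v ≠ v} ≤ #{v ∈ A | p v ≠ v ∧ p v ∉ J} := by
    refine card_le_card fun v hv => ?_
    obtain ⟨hvAF, hpv⟩ := mem_filter.1 hv
    obtain ⟨hvA, hvF⟩ := mem_sdiff.1 hvAF
    rw [retarget_of_notMem hvF] at hpv
    exact mem_filter.2 ⟨hvA, hpv, fun h => hvF (mem_filter.2 ⟨hvA, hpv, h⟩)⟩
  rw [retarget_retarget, union_sdiff_of_subset hFA] at h_rest
  exact (h_fibres.trans h_rest).mono (by lia)

end Reaches

end PointerCircuits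

section Sweep

/-- The vertices in the colour class of `c` or in the preceding class, among which the pointers of
the typical neighbours of `c` are found when `c` is processed. For the least colour,
`Order.pred (f c) = f c`. -/
def nearClasses {V α : Type*} [Fintype V] [LinearOrder α] [PredOrder α] (f : V → α) (c : V) :
    Finset V :=
  {j | f j = f c ∨ f j = Order.pred (f c)}

/-- The vertices that have no neighbour of colour `t`. -/
def undominated {V α : Type*} [Fintype V] [DecidableEq α] (G : SimpleGraph V)
    [DecidableRel G.Adj] (f : V → α) (t : α) : Finset V :=
  {v | ∀ u, G.Adj v u → f u ≠ t}

/-- The situation after the circuit `C` has processed the vertices in `S`: the pointers `p` encode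
its final state, and all edges that meet `S` have been realized. Only the colour of the last
processed neighbour of a vertex matters, so `color_le` asks the pointer to have the largest colour
among the processed neighbours. -/
structure IsSweep {V α : Type*} [DecidableEq V] [LE α] (G : SimpleGraph V) (f : V → α)
    (S : Finset V) (C : List (V × V)) (p : V → V) : Prop where
  control_ne_target : ∀ g ∈ C, g.1 ≠ g.2
  run_eq : runCircuit C = pointerState p
  realizes : ∀ u ∈ S, ∀ v, G.Adj u v → ∃ D w, D <+: C ∧ runCircuit D w = {u, v}
  pointer_self : ∀ v ∈ S, p v = v
  pointer_mem : ∀ v, p v ≠ v → p v ∈ S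
  color_le : ∀ v, p v ≠ v → ∀ u ∈ S, G.Adj v u → f u ≤ f (p v)

variable {V α : Type*} [DecidableEq V] [LinearOrder α] {G : SimpleGraph V} {f : V → α}
  {S : Finset V} {C D : List (V × V)} {p : V → V} {a : V}

namespace IsSweep

lemma empty (G : SimpleGraph V) (f : V → α) : IsSweep G f ∅ [] id where
  control_ne_target := by simp
  run_eq := by funext v; simp [runCircuit, pointerState]
  realizes := by simp
  pointer_self := by simp
  pointer_mem := by simp
  color_le := by simp

lemma pointer_pointer (h : IsSweep G f S C p) {v : V} (hv : p v ≠ v) : p (p v) = p v :=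
  h.pointer_self _ (h.pointer_mem v hv)

variable [Fintype V]

lemma isGPN (h : IsSweep G f univ C p) : IsGPN G C := by
  refine ⟨h.control_ne_target, fun u v huv => ?_, fun v => ?_⟩
  · obtain ⟨D, w, hDC, hw⟩ := h.realizes u (mem_univ u) v huv
    exact ⟨D.length, w, List.prefix_iff_eq_take.1 hDC ▸ hw⟩
  · simp [h.run_eq, pointerState, h.pointer_self v (mem_univ v)]

variable [DecidableRel G.Adj]

lemma append (h : IsSweep G f S C p) (ha : a ∉ S) (hS : ∀ x ∈ S, f x ≤ f a)
    (hD : ∀ g ∈ D, g.1 ≠ g.2)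
    (hrun : runCircuit (C ++ D) =
      pointerState (retarget (update p a a) (G.neighborFinset a \ S) a)) :
    IsSweep G f (insert a S) (C ++ D)
      (retarget (update p a a) (G.neighborFinset a \ S) a) := by
  set q := retarget (update p a a) (G.neighborFinset a \ S) a with hq
  have hqa : q a = a := by simp [hq, retarget]
  have hqnew : ∀ v, G.Adj a v → v ∉ S → q v = a := fun v hav hvS =>
    retarget_of_mem (by simp [hav, hvS])
  have hqS : ∀ v ∈ S, q v = p v := fun v hv => by
    rw [hq, retarget_of_notMem (by simp [hv]), update_of_ne (ne_of_mem_of_not_mem hv ha)]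
  have hq_moved : ∀ v, q v ≠ v → q v = a ∨ ¬ G.Adj a v ∧ q v = p v := fun v hqv => by
    have hva : v ≠ a := fun e => hqv (e ▸ hqa)
    by_cases hvS : v ∈ S
    · exact absurd ((hqS v hvS).trans (h.pointer_self v hvS)) hqv
    · by_cases hav : G.Adj a v
      · exact .inl (hqnew v hav hvS)
      · exact .inr ⟨hav, by simp [hq, retarget, hav, hva]⟩
  have hold : ∀ u ∈ S, ∀ v, G.Adj u v → ∃ E w, E <+: C ++ D ∧ runCircuit E w = {u, v} :=
    fun u hu v huv =>
      let ⟨E, w, hEC, hw⟩ := h.realizes u hu v huv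
      ⟨E, w, hEC.trans (List.prefix_append C D), hw⟩
  refine ⟨?_, hrun, ?_, ?_, ?_, ?_⟩
  · exact fun g hg => (List.mem_append.1 hg).elim (h.control_ne_target g) (hD g)
  · refine forall_mem_insert _ _ _ |>.2 ⟨fun v hav => ?_, hold⟩
    by_cases hvS : v ∈ S
    · simpa only [pair_comm] using hold v hvS a hav.symm
    · exact ⟨C ++ D, v, List.prefix_rfl, by rw [hrun, pointerState, hqnew v hav hvS, pair_comm]⟩
  · exact forall_mem_insert _ _ _ |>.2 ⟨hqa, fun v hv => (hqS v hv).trans (h.pointer_self v hv)⟩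
  · intro v hqv
    rcases hq_moved v hqv with hv | ⟨-, hv⟩
    · exact hv ▸ mem_insert_self a S
    · exact hv ▸ mem_insert_of_mem (h.pointer_mem v (hv ▸ hqv))
  · intro v hqv
    rcases hq_moved v hqv with hv | ⟨hav, hv⟩ <;> rw [hv]
    · exact forall_mem_insert _ _ _ |>.2 ⟨fun _ => le_rfl, fun u hu _ => hS u hu⟩
    · exact forall_mem_insert _ _ _ |>.2
        ⟨fun hva => absurd hva.symm hav, h.color_le v (hv ▸ hqv)⟩

variable [PredOrder α]

lemma mem_undominated_of_pointer_notMem_nearClasses (h : IsSweep G f S C p)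
    (hS : ∀ x ∈ S, f x ≤ f a) (hSc : ∀ y ∉ S, f a ≤ f y) {v : V} (hv : p v ≠ v)
    (hfar : p v ∉ nearClasses f a) : v ∈ undominated G f (Order.pred (f a)) := by
  simp only [nearClasses, mem_filter, mem_univ, true_and, not_or] at hfar
  have hlt : f (p v) < f a := (hS _ (h.pointer_mem v hv)).lt_of_ne hfar.1
  have hlt_pred : f (p v) < Order.pred (f a) := (Order.le_pred_of_lt hlt).lt_of_ne hfar.2
  have hpred_lt : Order.pred (f a) < f a := Order.pred_lt_of_not_isMin hlt.not_isMin
  simp only [undominated, mem_filter, mem_univ, true_and]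
  intro u huv
  by_cases hu : u ∈ S
  · exact ((h.color_le v hv u hu huv).trans_lt hlt_pred).ne
  · exact (hpred_lt.trans_le (hSc u hu)).ne'

lemma reaches_insert (h : IsSweep G f S C p) (ha : a ∉ S) (hS : ∀ x ∈ S, f x ≤ f a)
    (hSc : ∀ y ∉ S, f a ≤ f y) :
    Reaches p (retarget (update p a a) (G.neighborFinset a \ S) a)
      (#(G.neighborFinset a \ S) +
        (2 * #(nearClasses f a) + #(undominated G f (Order.pred (f a))) + 1)) := by
  set A := G.neighborFinset a \ S
  have haA : a ∉ A := by simp [A]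
  have h_reset : Reaches p (update p a a) 1 := by
    by_cases hpa : p a = a
    · rw [update_eq_self_iff.2 hpa.symm]
      exact (Reaches.refl p).mono zero_le_one
    · exact Reaches.detach rfl (h.pointer_pointer hpa) hpa
  have h_pointer : ∀ v ∈ A, update p a a v = p v := fun v hv =>
    update_of_ne (ne_of_mem_of_not_mem hv haA) _ _
  have h_redirect := Reaches.retarget_each_or_fibres (update_self a a p) haA (fun v hv hpv => by
    rw [h_pointer v hv] at hpv ⊢
    have hpS := h.pointer_mem v hpv
    have hpa : p v ≠ a := ne_of_mem_of_not_mem hpS ha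
    rw [update_of_ne hpa]
    exact ⟨hpa, fun hp => (mem_sdiff.1 hp).2 hpS, h.pointer_pointer hpv⟩) (nearClasses f a)
  have h_far : #{v ∈ A | update p a a v ≠ v ∧ update p a a v ∉ nearClasses f a} ≤
      #(undominated G f (Order.pred (f a))) := by
    refine card_le_card fun v hv => ?_
    obtain ⟨hvA, hpv, hpfar⟩ := mem_filter.1 hv
    rw [h_pointer v hvA] at hpv hpfar
    exact h.mem_undominated_of_pointer_notMem_nearClasses hS hSc hpv hpfar
  exact (h_reset.trans h_redirect).mono (by lia)

lemma exists_insert (h : IsSweep G f S C p) (ha : a ∉ S) (hS : ∀ x ∈ S, f x ≤ f a)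
    (hSc : ∀ y ∉ S, f a ≤ f y) :
    ∃ C' q, IsSweep G f (insert a S) C' q ∧
      C'.length ≤ C.length + (#(G.neighborFinset a \ S) +
        (2 * #(nearClasses f a) + #(undominated G f (Order.pred (f a))) + 1)) := by
  obtain ⟨D, hD, hlen, hrun⟩ := h.reaches_insert ha hS hSc
  refine ⟨C ++ D, _, h.append ha hS hD ?_, by rw [List.length_append]; lia⟩
  rw [runCircuit, List.foldl_append, ← hrun, ← h.run_eq, runCircuit]

end IsSweep

variable [Fintype V]

lemma card_biUnion_incidenceFinset_add_le [DecidableRel G.Adj] (ha : a ∉ S) :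
    #(S.biUnion (G.incidenceFinset ·)) + #(G.neighborFinset a \ S) ≤
      #((insert a S).biUnion (G.incidenceFinset ·)) := by
  have hcard : #((G.neighborFinset a \ S).image fun v => s(a, v)) = #(G.neighborFinset a \ S) :=
    card_image_of_injective _ fun _ _ => Sym2.congr_right.1
  have hdisj : Disjoint (S.biUnion (G.incidenceFinset ·))
      ((G.neighborFinset a \ S).image fun v => s(a, v)) := by
    simp only [disjoint_left, mem_biUnion, mem_image, mem_sdiff, SimpleGraph.mem_incidenceFinset]
    rintro _ ⟨x, hx, -, hxe⟩ ⟨v, ⟨-, hvS⟩, rfl⟩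
    rcases Sym2.mem_iff.1 hxe with rfl | rfl
    exacts [ha hx, hvS hx]
  rw [← hcard, ← card_union_of_disjoint hdisj, biUnion_insert]
  refine card_le_card (union_subset subset_union_right (Subset.trans ?_ subset_union_left))
  intro e he
  obtain ⟨v, hv, rfl⟩ := mem_image.1 he
  simp only [mem_sdiff, SimpleGraph.mem_neighborFinset] at hv
  simpa using hv.1

theorem exists_isGPN_of_coloring [PredOrder α] (G : SimpleGraph V) [DecidableRel G.Adj]
    (f : V → α) :
    ∃ C : List (V × V), IsGPN G C ∧ C.length ≤ #G.edgeFinset +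
      ∑ c, (2 * #(nearClasses f c) + #(undominated G f (Order.pred (f c))) + 1) := by
  suffices ∀ S : Finset V, (∀ x ∈ S, ∀ y ∉ S, f x ≤ f y) →
      ∃ C p, IsSweep G f S C p ∧ C.length ≤ #(S.biUnion (G.incidenceFinset ·)) +
        ∑ c ∈ S, (2 * #(nearClasses f c) + #(undominated G f (Order.pred (f c))) + 1) by
    obtain ⟨C, p, hC, hlen⟩ := this univ (by simp)
    have hedges : univ.biUnion (G.incidenceFinset ·) ⊆ G.edgeFinset :=
      biUnion_subset.2 fun v _ => G.incidenceFinset_subset v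
    exact ⟨C, hC.isGPN, hlen.trans (by gcongr)⟩
  intro S
  induction S using Finset.induction_on_max_value f with
  | empty => exact fun _ => ⟨[], id, IsSweep.empty G f, by simp⟩
  | insert a S ha hS ih =>
    intro hlower
    have hSc : ∀ y ∉ S, f a ≤ f y := fun y hy => by
      rcases eq_or_ne y a with rfl | hya
      · exact le_rfl
      · exact hlower a (mem_insert_self a S) y (by simp [hya, hy])
    obtain ⟨C, p, hC, hlen⟩ := ih fun x hx y hy => (hS x hx).trans (hSc y hy)
    obtain ⟨C', q, hC', hlen'⟩ := hC.exists_insert ha hS hSc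
    have hedges := card_biUnion_incidenceFinset_add_le (G := G) ha
    exact ⟨C', q, hC', by rw [sum_insert ha]; lia⟩

end Sweep

section RandomColoring

lemma expect_card_filter {Ω ι : Type*} [Fintype Ω] [Fintype ι] (P : Ω → ι → Prop)
    [∀ ω i, Decidable (P ω i)] :
    𝔼 ω, (#{i | P ω i} : ℝ) = ∑ i, (dens {ω | P ω i} : ℝ) := by
  simp only [card_filter, Nat.cast_sum, expect_sum_comm, nnratCast_dens]
  simp [Fintype.expect_eq_sum_div_card]

variable {V α : Type*} [Fintype V] [DecidableEq V] [Fintype α]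

lemma dens_apply_eq_le [DecidableEq α] [Nonempty α] (j : V) {τ : (V → α) → α}
    (hτ : ∀ f x, τ (update f j x) = τ f) :
    (dens {f : V → α | f j = τ f} : ℝ) ≤ 1 / Fintype.card α := by
  have hinj : #(({f : V → α | f j = τ f} : Finset (V → α)) ×ˢ (univ : Finset α)) ≤
      #(univ : Finset (V → α)) := by
    refine card_le_card_of_injOn (fun x => update x.1 j x.2) (by simp) ?_
    rintro ⟨f, x⟩ hf ⟨g, y⟩ hg (hfg : update f j x = update g j y)
    simp only [coe_product, Set.mem_prod, mem_coe, mem_filter, mem_univ, true_and, and_true]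
      at hf hg
    have hxy : x = y := by simpa using congrFun hfg j
    have hτfg : τ f = τ g := by rw [← hτ f x, hfg, hτ]
    have : f = g := by
      funext v
      rcases eq_or_ne v j with rfl | hv
      · rw [hf, hg, hτfg]
      · simpa [hv] using congrFun hfg v
    rw [hxy, this]
  rw [card_product, card_univ, card_univ] at hinj
  rw [nnratCast_dens, div_le_div_iff₀ (by positivity) (by positivity), one_mul]
  exact_mod_cast hinj

lemma dens_forall_mem_ne [DecidableEq α] (S : Finset V) (t : α) :
    (dens {f : V → α | ∀ u ∈ S, f u ≠ t} : ℝ) = (1 - 1 / Fintype.card α) ^ #S := by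
  have : Nonempty α := ⟨t⟩
  have hpi : ({f : V → α | ∀ u ∈ S, f u ≠ t} : Finset (V → α)) =
      Fintype.piFinset fun u => if u ∈ S then univ.erase t else univ := by
    ext f
    simp only [mem_filter, mem_univ, true_and, Fintype.mem_piFinset]
    refine forall_congr' fun u => ?_
    by_cases hu : u ∈ S <;> simp [hu]
  have hfactor : ∀ u, (#(if u ∈ S then univ.erase t else univ) : ℝ) / Fintype.card α =
      if u ∈ S then 1 - 1 / (Fintype.card α : ℝ) else 1 := by
    intro u
    split_ifs
    · rw [cast_card_erase_of_mem (mem_univ t), card_univ, sub_div, div_self (by positivity)]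
    · rw [card_univ, div_self (by positivity)]
  rw [hpi, nnratCast_dens, Fintype.card_piFinset, Fintype.card_fun, Nat.cast_prod, Nat.cast_pow,
    ← card_univ (α := V), ← prod_const, ← prod_div_distrib, prod_congr rfl fun u _ => hfactor u]
  simp [prod_ite_mem]

lemma expect_card_nearClasses_le [LinearOrder α] [PredOrder α] [Nonempty α] (c : V) :
    𝔼 f : V → α, (#(nearClasses f c) : ℝ) ≤ 1 + Fintype.card V * (2 / Fintype.card α) := by
  have hdens : ∀ j, (dens {f : V → α | f j = f c ∨ f j = Order.pred (f c)} : ℝ) ≤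
      (if j = c then 1 else 0) + 2 / Fintype.card α := by
    intro j
    rcases eq_or_ne j c with rfl | hj
    · simp only [true_or, filter_true, dens_univ, NNRat.cast_one, if_true]
      exact le_add_of_nonneg_right (by positivity)
    · rw [filter_or]
      refine (NNRat.cast_mono (dens_union_le _ _)).trans ?_
      have h_same := dens_apply_eq_le j (τ := fun f : V → α => f c) (by simp [hj.symm])
      have h_pred := dens_apply_eq_le j (τ := fun f : V → α => Order.pred (f c))
        (by simp [hj.symm])
      rw [NNRat.cast_add, if_neg hj, zero_add, show (2 : ℝ) = 1 + 1 by norm_num, add_div]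
      exact add_le_add h_same h_pred
  calc 𝔼 f : V → α, (#(nearClasses f c) : ℝ)
      = ∑ j, (dens {f : V → α | f j = f c ∨ f j = Order.pred (f c)} : ℝ) :=
        expect_card_filter _
    _ ≤ ∑ j, ((if j = c then 1 else 0) + 2 / (Fintype.card α : ℝ)) :=
        sum_le_sum fun j _ => hdens j
    _ = 1 + Fintype.card V * (2 / Fintype.card α) := by simp [sum_add_distrib]

variable (G : SimpleGraph V) [DecidableRel G.Adj]

/-- The colour `τ f` may depend on the colouring, so the bound is a union bound over all colours. -/
lemma expect_card_undominated_le [DecidableEq α] (A : Finset V)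
    (τ : (V → α) → α) :
    𝔼 f : V → α, (#(undominated G f (τ f)) : ℝ) ≤
      #A + ∑ v ∈ Aᶜ, Fintype.card α * (1 - 1 / Fintype.card α : ℝ) ^ G.degree v := by
  have hdens : ∀ v, (dens {f : V → α | ∀ u, G.Adj v u → f u ≠ τ f} : ℝ) ≤
      Fintype.card α * (1 - 1 / Fintype.card α : ℝ) ^ G.degree v := by
    intro v
    have hsub : ({f : V → α | ∀ u, G.Adj v u → f u ≠ τ f} : Finset (V → α)) ⊆
        univ.biUnion fun t => {f : V → α | ∀ u ∈ G.neighborFinset v, f u ≠ t} := by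
      intro f hf
      simpa using ⟨τ f, (mem_filter.1 hf).2⟩
    calc (dens {f : V → α | ∀ u, G.Adj v u → f u ≠ τ f} : ℝ)
        ≤ ∑ t : α, (dens {f : V → α | ∀ u ∈ G.neighborFinset v, f u ≠ t} : ℝ) := by
          exact_mod_cast (dens_le_dens hsub).trans dens_biUnion_le
      _ = Fintype.card α * (1 - 1 / Fintype.card α : ℝ) ^ G.degree v := by
          simp only [dens_forall_mem_ne, sum_const, card_univ, nsmul_eq_mul,
            SimpleGraph.card_neighborFinset_eq_degree]
  calc 𝔼 f : V → α, (#(undominated G f (τ f)) : ℝ)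
      = ∑ v, (dens {f : V → α | ∀ u, G.Adj v u → f u ≠ τ f} : ℝ) := expect_card_filter _
    _ = ∑ v ∈ A, (dens {f : V → α | ∀ u, G.Adj v u → f u ≠ τ f} : ℝ) +
          ∑ v ∈ Aᶜ, (dens {f : V → α | ∀ u, G.Adj v u → f u ≠ τ f} : ℝ) :=
        (sum_add_sum_compl A _).symm
    _ ≤ ∑ v ∈ A, 1 + ∑ v ∈ Aᶜ, Fintype.card α * (1 - 1 / Fintype.card α : ℝ) ^ G.degree v :=
        add_le_add (sum_le_sum fun v _ => by exact_mod_cast dens_le_one)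
          (sum_le_sum fun v _ => hdens v)
    _ = _ := by simp

lemma exists_coloring (α : Type*) [Fintype α] [LinearOrder α] [PredOrder α] [Nonempty α]
    (A : Finset V) :
    ∃ f : V → α, ((∑ c, (2 * #(nearClasses f c) + #(undominated G f (Order.pred (f c))) + 1) : ℕ)
      : ℝ) ≤ Fintype.card V * (3 + 4 * (Fintype.card V / Fintype.card α) + #A +
        ∑ v ∈ Aᶜ, Fintype.card α * (1 - 1 / Fintype.card α : ℝ) ^ G.degree v) := by
  refine (exists_le_of_expect_le univ_nonempty ?_).imp fun f => And.right
  push_cast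
  rw [expect_sum_comm, ← nsmul_eq_mul, ← card_univ]
  refine sum_le_card_nsmul _ _ _ fun c _ => ?_
  rw [expect_add_distrib, expect_add_distrib, ← mul_expect, Fintype.expect_const]
  have h_near := expect_card_nearClasses_le (α := α) c
  have h_undominated := expect_card_undominated_le (α := α) G A fun f => Order.pred (f c)
  rw [mul_div_left_comm] at h_near
  rw [card_univ]
  linarith

end RandomColoring

section Parameters

lemma half_le_log_natCast {n : ℕ} (hn : 2 ≤ n) : 1 / 2 ≤ Real.log n :=
  calc (1 / 2 : ℝ) ≤ Real.log 2 := by linarith [Real.log_two_gt_d9]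
    _ ≤ Real.log n := Real.log_le_log (by norm_num) (by exact_mod_cast hn)

lemma ceil_mul_one_sub_pow_le {x L : ℝ} {d : ℕ} (hx : 0 < x) (hL : 0 < L) (hd : 4 * L * x ≤ d) :
    ⌈x⌉₊ * (1 - 1 / (⌈x⌉₊ : ℝ)) ^ d ≤ 2 * x * Real.exp (-2 * L) := by
  rcases le_or_gt x 1 with hx₁ | hx₁
  · have hd₀ : d ≠ 0 := by
      rintro rfl
      have : 0 < 4 * L * x := by positivity
      simp only [Nat.cast_zero] at hd
      linarith
    have hceil : ⌈x⌉₊ = 1 := le_antisymm (Nat.ceil_le.2 (by simpa using hx₁)) (Nat.ceil_pos.2 hx)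
    rw [hceil, Nat.cast_one, div_one, sub_self, zero_pow hd₀, mul_zero]
    positivity
  · have hT : 1 ≤ (⌈x⌉₊ : ℝ) := hx₁.le.trans (Nat.le_ceil x)
    have hTx : (⌈x⌉₊ : ℝ) ≤ 2 * x := by linarith [Nat.ceil_lt_add_one hx.le]
    have hexponent : d * -(1 / (⌈x⌉₊ : ℝ)) ≤ -2 * L := by
      have : 2 * L ≤ d / ⌈x⌉₊ := by
        rw [le_div_iff₀ (by positivity)]
        nlinarith
      linarith [mul_one_div (d : ℝ) ⌈x⌉₊]
    have hbase : 0 ≤ 1 - 1 / (⌈x⌉₊ : ℝ) := sub_nonneg.2 (div_le_one_of_le₀ hT (by positivity))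
    have hpow : (1 - 1 / (⌈x⌉₊ : ℝ)) ^ d ≤ Real.exp (-2 * L) :=
      calc (1 - 1 / (⌈x⌉₊ : ℝ)) ^ d ≤ Real.exp (-(1 / ⌈x⌉₊)) ^ d :=
            pow_le_pow_left₀ hbase (Real.one_sub_le_exp_neg _) d
        _ = Real.exp (d * -(1 / ⌈x⌉₊)) := (Real.exp_nat_mul _ _).symm
        _ ≤ Real.exp (-2 * L) := Real.exp_le_exp.2 hexponent
    exact mul_le_mul hTx hpow (pow_nonneg hbase d) (by positivity)

lemma ceil_mul_one_sub_pow_le_one_div {n d : ℕ} {c : ℝ} (hn : 2 ≤ n) (hc : 0 < c)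
    (hd : c * n ≤ d) (hdn : d ≤ n) :
    ⌈c * n / (4 * Real.log n)⌉₊ * (1 - 1 / (⌈c * n / (4 * Real.log n)⌉₊ : ℝ)) ^ d ≤ 1 / n := by
  have hn₀ : (0 : ℝ) < n := by positivity
  have hL := half_le_log_natCast hn
  have hL₀ : 0 < Real.log n := by linarith
  have hx : 4 * Real.log n * (c * n / (4 * Real.log n)) = c * n := mul_div_cancel₀ _ (by positivity)
  have hcn : c * n ≤ n := hd.trans (by exact_mod_cast hdn)
  refine (ceil_mul_one_sub_pow_le (by positivity) hL₀ (hx.trans_le hd)).trans ?_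
  have hexp : Real.exp (-2 * Real.log n) = 1 / (n * n) := by
    rw [neg_mul, Real.exp_neg, two_mul, Real.exp_add, Real.exp_log hn₀, one_div]
  have hxn : 2 * (c * n / (4 * Real.log n)) ≤ n := by
    rw [mul_div_assoc', div_le_iff₀ (by positivity)]
    nlinarith
  calc 2 * (c * n / (4 * Real.log n)) * Real.exp (-2 * Real.log n)
      ≤ n * (1 / (n * n)) := by rw [hexp]; gcongr
    _ = 1 / n := by field_simp

lemma exists_coloring_of_le_degree {V : Type*} [Fintype V] (hV : 2 ≤ Fintype.card V)
    (G : SimpleGraph V) [DecidableRel G.Adj] {c : ℝ} (hc : 0 < c)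
    (A : Finset V) (hA : ∀ v ∉ A, c * Fintype.card V ≤ G.degree v) :
    ∃ (T : ℕ) (f : V → Fin T),
      ((∑ v, (2 * #(nearClasses f v) + #(undominated G f (Order.pred (f v))) + 1) : ℕ) : ℝ) ≤
        Fintype.card V * (4 + #A + 16 * Real.log (Fintype.card V) / c) := by
  classical
  set n := Fintype.card V
  set L := Real.log n
  have hL : 1 / 2 ≤ L := half_le_log_natCast hV
  have hx : 0 < c * n / (4 * L) := by positivity
  set T := ⌈c * n / (4 * L)⌉₊
  have : Nonempty (Fin T) := Fin.pos_iff_nonempty.1 (Nat.ceil_pos.2 hx)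
  have h_undominated : ∑ v ∈ Aᶜ, (T : ℝ) * (1 - 1 / T) ^ G.degree v ≤ 1 :=
    calc ∑ v ∈ Aᶜ, (T : ℝ) * (1 - 1 / T) ^ G.degree v ≤ ∑ _v ∈ Aᶜ, 1 / (n : ℝ) :=
          sum_le_sum fun v hv => ceil_mul_one_sub_pow_le_one_div hV hc
            (hA v (mem_compl.1 hv)) (G.degree_lt_card_verts v).le
      _ ≤ ∑ _v : V, 1 / (n : ℝ) :=
          sum_le_sum_of_subset_of_nonneg (subset_univ _) fun _ _ _ => by positivity
      _ = 1 := by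
          rw [sum_const, card_univ, nsmul_eq_mul, mul_one_div_cancel (by positivity)]
  have h_classes : (n : ℝ) / T ≤ 4 * L / c :=
    calc (n : ℝ) / T ≤ n / (c * n / (4 * L)) := by gcongr; exact Nat.le_ceil _
      _ = 4 * L / c := by field_simp
  obtain ⟨f, hf⟩ := exists_coloring G (Fin T) A
  rw [Fintype.card_fin] at hf
  refine ⟨T, f, hf.trans ?_⟩
  calc (n : ℝ) * (3 + 4 * (n / T) + #A + ∑ v ∈ Aᶜ, (T : ℝ) * (1 - 1 / T) ^ G.degree v)
      ≤ n * (3 + 4 * (4 * L / c) + #A + 1) := by gcongr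
    _ = n * (4 + #A + 16 * L / c) := by ring

end Parameters

theorem stmt3_general {V : Type*} [Fintype V] [DecidableEq V] (hV : 2 ≤ Fintype.card V)
    (G : SimpleGraph V) {c₁ : ℕ} {c₂ : ℝ} (hc₂ : 0 < c₂)
    (hG : Nat.card {v : V | (Nat.card (G.neighborSet v) : ℝ) < c₂ * Fintype.card V} ≤ c₁) :
    ∃ C : List (V × V), IsGPN G C ∧
      (C.length : ℝ) ≤ Nat.card G.edgeSet +
        (2 * (4 + c₁) + 16 / c₂) * Fintype.card V * Real.log (Fintype.card V) := by
  classical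
  set n := Fintype.card V
  set L := Real.log n
  have hL : 1 / 2 ≤ L := half_le_log_natCast hV
  have hdegree : ∀ v, Nat.card (G.neighborSet v) = G.degree v := fun v => by
    rw [Nat.card_eq_fintype_card, SimpleGraph.card_neighborSet_eq_degree]
  set A : Finset V := {v | (G.degree v : ℝ) < c₂ * n} with hA
  have hcard : #A ≤ c₁ := by
    simpa only [hdegree, Nat.card_eq_fintype_card, Set.coe_ofPred, Fintype.card_subtype] using hG
  obtain ⟨T, f, hf⟩ := exists_coloring_of_le_degree hV G hc₂ A fun v hv => by simpa [hA] using hv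
  obtain ⟨C, hC, hlen⟩ := exists_isGPN_of_coloring G f
  refine ⟨C, hC, ?_⟩
  have hconst : (4 + c₁ : ℝ) ≤ 2 * L * (4 + c₁) :=
    le_mul_of_one_le_left (by positivity) (by linarith)
  rw [Nat.card_eq_fintype_card, ← SimpleGraph.edgeFinset_card]
  calc (C.length : ℝ)
      ≤ #G.edgeFinset + n * (4 + #A + 16 * L / c₂) :=
        (Nat.cast_le.2 hlen).trans (by rw [Nat.cast_add]; gcongr)
    _ ≤ #G.edgeFinset + n * (4 + c₁ + 16 * L / c₂) := by gcongr
    _ ≤ #G.edgeFinset + n * (2 * L * (4 + c₁) + 16 * L / c₂) := by gcongr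
    _ = #G.edgeFinset + (2 * (4 + c₁) + 16 / c₂) * n * L := by ring

/-- For every `c₁ : ℕ` and real `0 < c₂ ≤ 1` there is a constant `K` such that every
graph on `n ≥ 2` vertices with `m` edges in which all but at most `c₁` vertices have
degree at least `c₂ · n` admits a graphic parity network of size at most
`m + K · n · ln n`. -/
theorem stmt3 (c₁ : ℕ) (c₂ : ℝ) (hc₂ : 0 < c₂) (hc₂' : c₂ ≤ 1) :
    ∃ K : ℝ, ∀ n : ℕ, 2 ≤ n → ∀ G : SimpleGraph (Fin n),
      Nat.card {v : Fin n | (Nat.card (G.neighborSet v) : ℝ) < c₂ * n} ≤ c₁ →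
      ∃ C : List (Fin n × Fin n), IsGPN G C ∧
        (C.length : ℝ) ≤ (Nat.card G.edgeSet : ℝ) + K * n * Real.log n :=
  ⟨2 * (4 + c₁) + 16 / c₂, fun n hn G hG => by
    simpa using stmt3_general (by simpa using hn) G hc₂ (by simpa using hG)⟩
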